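/- Let A be a C*-algebra and let a, b be positive elements of A with ‖a‖ ≤ 1 and ‖b‖ ≤ 1. Suppose a ≼ (b - δ)₊ for some δ > 0 (Cuntz subequivalence). Then for every ε > 0 there exists x ∈ A with (a - ε)₊ = x b x* and ‖x‖² ≤ ‖a‖/δ. -/

import Mathlib

open Filter Topology

def CuntzBelow {A : Type*} [CStarAlgebra A] (a b : A) : Prop :=
  ∃ x : ℕ → A, Tendsto (fun n => ‖a - x n * b * star (x n)‖) atTop (𝓝 0)

noncomputable def cutoff {A : Type*} [CStarAlgebra A] (a : A) (δ : ℝ) : A :=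
  cfc (fun t : ℝ => max (t - δ) 0) a

/-!
Write `r = ‖a - d‖ < ε`, `η = (ε - r) / 2` and `f = √(a - ε)₊`. From `a ≤ d + r` one gets
`η f² ≤ f (d - η)₊ f`, and a Douglas-type factorization turns this inequality into an equality
`f² = y* d y`: this is Rørdam's lemma, so `a ≼ (b - δ)₊` yields `(a - ε)₊ = s (b - δ)₊ s*`.

The norm bound comes from the identity `(b - δ)₊ = g b g`, where `g² = (b - δ)₊ / max b δ` is at
most `δ⁻¹ (b - δ)₊`: for `x = s g` one has `x b x* = (a - ε)₊` and `x x* ≤ δ⁻¹ (a - ε)₊`.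
-/

section Cutoff

variable {A : Type*} [CStarAlgebra A]

theorem cfc_mul_cfc_mul_cfc (a : A) {g h : ℝ → ℝ} (hg : ContinuousOn g (spectrum ℝ a))
    (hh : ContinuousOn h (spectrum ℝ a)) :
    cfc g a * cfc h a * cfc g a = cfc (fun t => h t * (g t * g t)) a := by
  rw [← cfc_mul g h a, ← cfc_mul (fun t => g t * h t) g a (hg.mul hh) hg]
  congr! 2 with t
  ring

theorem sub_algebraMap_eq_cfc {a : A} (ha : IsSelfAdjoint a) (r : ℝ) :
    a - algebraMap ℝ A r = cfc (fun t : ℝ => t - r) a := by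
  rw [cfc_sub (fun t : ℝ => t) (fun _ => r) a, cfc_id' ℝ a, cfc_const r a]

theorem norm_cutoff_le (a : A) {ε : ℝ} (hε : 0 ≤ ε) : ‖cutoff a ε‖ ≤ ‖a‖ := by
  cases subsingleton_or_nontrivial A
  · rw [Subsingleton.elim (cutoff a ε) a]
  refine norm_cfc_le (norm_nonneg _) fun t ht => ?_
  have ht_le : t ≤ ‖a‖ := (le_abs_self t).trans (spectrum.norm_le_norm_of_mem ht)
  rw [Real.norm_of_nonneg (le_max_right _ _)]
  exact max_le (by linarith) (norm_nonneg _)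

theorem isSelfAdjoint_cutoff (a : A) (ε : ℝ) : IsSelfAdjoint (cutoff a ε) :=
  cfc_predicate _ a

variable [PartialOrder A] [StarOrderedRing A]

theorem cutoff_nonneg (a : A) (ε : ℝ) : 0 ≤ cutoff a ε :=
  cfc_nonneg fun _ _ => le_max_right _ _

theorem sub_algebraMap_le_cutoff {a : A} (ha : IsSelfAdjoint a) (ε : ℝ) :
    a - algebraMap ℝ A ε ≤ cutoff a ε := by
  rw [sub_algebraMap_eq_cfc ha]
  exact cfc_mono fun t _ => le_max_left _ _

theorem exists_mul_self_eq_cutoff {a : A} (ha : IsSelfAdjoint a) (ε : ℝ) :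
    ∃ f : A, IsSelfAdjoint f ∧ f * f = cutoff a ε ∧ 0 ≤ f * (a - algebraMap ℝ A ε) * f := by
  have hsq (t : ℝ) : √(max (t - ε) 0) * √(max (t - ε) 0) = max (t - ε) 0 :=
    Real.mul_self_sqrt (le_max_right _ _)
  refine ⟨cfc (fun t : ℝ => √(max (t - ε) 0)) a, cfc_predicate _ a, ?_, ?_⟩
  · rw [← cfc_mul (fun t : ℝ => √(max (t - ε) 0)) (fun t : ℝ => √(max (t - ε) 0)) a]
    exact cfc_congr fun t _ => hsq t
  · rw [sub_algebraMap_eq_cfc ha, cfc_mul_cfc_mul_cfc a (by fun_prop) (by fun_prop)]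
    refine cfc_nonneg fun t _ => ?_
    rw [hsq]
    rcases le_total (t - ε) 0 with ht | ht
    · rw [max_eq_right ht, mul_zero]
    · exact mul_nonneg ht (le_max_right _ _)

theorem exists_mul_mul_eq_cutoff {b : A} (hb : IsSelfAdjoint b) {δ : ℝ} (hδ : 0 < δ) :
    ∃ g : A, IsSelfAdjoint g ∧ g * b * g = cutoff b δ ∧ g * g ≤ δ⁻¹ • cutoff b δ := by
  set φ : ℝ → ℝ := fun t => √(max (t - δ) 0 / max t δ)
  have hφ : Continuous φ := by
    have hne (t : ℝ) : max t δ ≠ 0 := by positivity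
    fun_prop (disch := exact hne _)
  have hφ_sq (t : ℝ) : φ t * φ t = max (t - δ) 0 / max t δ := Real.mul_self_sqrt (by positivity)
  refine ⟨cfc φ b, cfc_predicate _ b, ?_, ?_⟩
  · calc cfc φ b * b * cfc φ b = cfc φ b * cfc (fun t : ℝ => t) b * cfc φ b := by rw [cfc_id' ℝ b]
      _ = cfc (fun t => t * (φ t * φ t)) b :=
        cfc_mul_cfc_mul_cfc b hφ.continuousOn continuousOn_id
      _ = cutoff b δ := cfc_congr fun t _ => ?_
    simp only [hφ_sq]
    rcases le_total t δ with ht | ht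
    · rw [max_eq_right (sub_nonpos.2 ht), zero_div, mul_zero]
    · rw [max_eq_left ht, mul_div_cancel₀ _ (hδ.trans_le ht).ne']
  · rw [cutoff, ← cfc_smul δ⁻¹ (fun t : ℝ => max (t - δ) 0) b,
      ← cfc_mul φ φ b hφ.continuousOn hφ.continuousOn]
    refine cfc_mono (fun t _ => ?_) (hφ.mul hφ).continuousOn (by fun_prop)
    rw [hφ_sq, smul_eq_mul, inv_mul_eq_div]
    exact div_le_div_of_nonneg_left (le_max_right _ _) hδ (le_max_right _ _)

end Cutoff

section Douglas

variable {A : Type*} [CStarAlgebra A]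

theorem exists_norm_one_sub_mul_mul_sq_le (k : A) {η : ℝ} (hη : 0 < η) :
    ∃ r : A, ‖(1 - k * r) * k‖ ^ 2 ≤ η := by
  set h := k * star k with h_def
  -- On the spectrum of `h` this is `(t + η)⁻¹`; the absolute value makes it continuous on `ℝ`.
  set φ : ℝ → ℝ := fun t => (|t| + η)⁻¹
  have hφ : Continuous φ := by
    have hne (t : ℝ) : |t| + η ≠ 0 := by positivity
    fun_prop (disch := exact hne _)
  set e := cfc (fun t => 1 - t * φ t) h with he_def
  have he : 1 - k * (star k * cfc φ h) = e := by
    rw [← mul_assoc, ← h_def, he_def, cfc_sub (fun _ : ℝ => 1) (fun t => t * φ t) h,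
      cfc_mul (fun t : ℝ => t) φ h, cfc_id' ℝ h, cfc_const_one ℝ h]
  have he_star : star e = e := (cfc_predicate (p := IsSelfAdjoint) _ h).star_eq
  refine ⟨star k * cfc φ h, ?_⟩
  calc ‖(1 - k * (star k * cfc φ h)) * k‖ ^ 2 = ‖e * h * e‖ := by
        rw [he, sq, ← CStarRing.norm_self_mul_star, star_mul, he_star, h_def]
        simp only [mul_assoc]
    _ = ‖cfc (fun t => t * ((1 - t * φ t) * (1 - t * φ t))) h‖ := by
        rw [← cfc_mul_cfc_mul_cfc h (g := fun t => 1 - t * φ t) (h := fun t => t) (by fun_prop)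
          (by fun_prop), cfc_id' ℝ h]
    _ ≤ η := norm_cfc_le hη.le fun t ht => ?_
  have ht_nonneg : 0 ≤ t := spectrum_star_mul_self_nonneg (b := star k) t (by rwa [star_star])
  have hφ_eq : 1 - t * φ t = η / (t + η) := by
    simp only [φ, abs_of_nonneg ht_nonneg]
    field_simp
    ring
  have hq_le : η / (t + η) ≤ 1 := div_le_one_of_le₀ (by linarith) (by positivity)
  have htq_le : t * (η / (t + η)) ≤ η := by
    rw [mul_div_left_comm]
    exact mul_le_of_le_one_right hη.le (div_le_one_of_le₀ (by linarith) (by positivity))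
  rw [hφ_eq, Real.norm_of_nonneg (by positivity), ← mul_assoc]
  exact (mul_le_of_le_one_right (by positivity) hq_le).trans htq_le

variable [PartialOrder A] [StarOrderedRing A]

theorem norm_mul_sq_le_of_star_mul_self_le {v k : A} {C : ℝ}
    (h : star v * v ≤ C • (star k * k)) (z : A) : ‖v * z‖ ^ 2 ≤ |C| * ‖k * z‖ ^ 2 := by
  have hconj : star (v * z) * (v * z) ≤ C • (star (k * z) * (k * z)) := by
    simpa only [star_mul, mul_assoc, mul_smul_comm, smul_mul_assoc] using
      star_left_conjugate_le_conjugate h z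
  simpa only [norm_smul, CStarRing.norm_star_mul_self, ← sq, Real.norm_eq_abs] using
    CStarAlgebra.norm_le_norm_of_nonneg_of_le (star_mul_self_nonneg _) hconj

theorem mem_closure_range_mul_of_mul_star_le {f k : A} {C : ℝ}
    (h : f * star f ≤ C • (k * star k)) : f ∈ closure (Set.range (k * ·)) := by
  refine Metric.mem_closure_range_iff.2 fun ε hε => ?_
  obtain ⟨r, hr⟩ := exists_norm_one_sub_mul_mul_sq_le k
    (η := ε ^ 2 / (|C| + 1)) (by positivity)
  refine ⟨r * f, ?_⟩
  have hle : ‖(1 - k * r) * f‖ ^ 2 ≤ |C| * ‖(1 - k * r) * k‖ ^ 2 := by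
    simpa only [← star_mul, norm_star] using
      norm_mul_sq_le_of_star_mul_self_le (v := star f) (k := star k) (C := C)
        (by simpa only [star_star] using h) (star (1 - k * r))
  rw [dist_eq_norm, ← mul_assoc, ← one_sub_mul]
  refine lt_of_pow_lt_pow_left₀ 2 hε.le ?_
  calc ‖(1 - k * r) * f‖ ^ 2 ≤ |C| * (ε ^ 2 / (|C| + 1)) := hle.trans (by gcongr)
    _ < ε ^ 2 := by
      rw [mul_div_assoc', div_lt_iff₀ (by positivity)]
      nlinarith [pow_pos hε 2]

theorem cauchySeq_mul_of_star_mul_self_le {v k : A} {C : ℝ}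
    (h : star v * v ≤ C • (star k * k)) {z : ℕ → A} (hz : CauchySeq fun n => k * z n) :
    CauchySeq fun n => v * z n := by
  have hdist (m n : ℕ) : dist (v * z m) (v * z n) ≤ √|C| * dist (k * z m) (k * z n) := by
    refine le_of_sq_le_sq ?_ (by positivity)
    simpa only [dist_eq_norm, ← mul_sub, mul_pow, Real.sq_sqrt (abs_nonneg C)] using
      norm_mul_sq_le_of_star_mul_self_le h (z m - z n)
  rw [cauchySeq_iff_tendsto_dist_atTop_0] at hz ⊢
  exact squeeze_zero (fun _ => dist_nonneg) (fun p => hdist p.1 p.2)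
    (by simpa using hz.const_mul √|C|)

-- If `√c * z n → f`, then `v * z n` converges to the required `y`.
theorem exists_star_mul_mul_eq_star_mul_self {c d f v : A} {C₁ C₂ : ℝ} (hc : 0 ≤ c)
    (hvdv : star v * d * v = c) (hv : star v * v ≤ C₁ • c) (hf : f * star f ≤ C₂ • c) :
    ∃ y : A, star y * d * y = star f * f := by
  set k := CFC.sqrt c
  have hk_star : star k = k := (IsSelfAdjoint.of_nonneg (CFC.sqrt_nonneg c)).star_eq
  have hkk : k * k = c := CFC.sqrt_mul_sqrt_self c
  obtain ⟨_, hmem, hkz⟩ := mem_closure_iff_seq_limit.1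
    (mem_closure_range_mul_of_mul_star_le (f := f) (k := k) (C := C₂) (by rwa [hk_star, hkk]))
  choose z hz using hmem
  obtain rfl : (fun n => k * z n) = _ := funext hz
  obtain ⟨y, hy⟩ := cauchySeq_tendsto_of_complete <|
    cauchySeq_mul_of_star_mul_self_le (v := v) (C := C₁) (by rwa [hk_star, hkk]) hkz.cauchySeq
  have heq (n : ℕ) : star (v * z n) * d * (v * z n) = star (k * z n) * (k * z n) :=
    calc star (v * z n) * d * (v * z n) = star (z n) * (star v * d * v) * z n := by
          simp only [star_mul, mul_assoc]
      _ = star (k * z n) * (k * z n) := by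
          rw [hvdv, ← hkk, star_mul, hk_star]
          simp only [mul_assoc]
  refine ⟨y, tendsto_nhds_unique ((hy.star.mul_const d).mul hy) ?_⟩
  simpa only [heq] using hkz.star.mul hkz

end Douglas

section Rordam

variable {A : Type*} [CStarAlgebra A]

theorem smul_mul_self_le_mul_cutoff_mul [PartialOrder A] [StarOrderedRing A] {a d f : A}
    (ha : IsSelfAdjoint a) (hd : IsSelfAdjoint d) (hf : IsSelfAdjoint f) {ε : ℝ}
    (hfaf : 0 ≤ f * (a - algebraMap ℝ A ε) * f) (η : ℝ) :
    (ε - ‖a - d‖ - η) • (f * f) ≤ f * cutoff d η * f := by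
  set γ := ε - ‖a - d‖ - η with hγ
  have hle : a - algebraMap ℝ A ε + algebraMap ℝ A γ ≤ cutoff d η :=
    calc a - algebraMap ℝ A ε + algebraMap ℝ A γ
        = (a - d) - algebraMap ℝ A ‖a - d‖ + (d - algebraMap ℝ A η) := by
          simp only [hγ, map_sub]
          abel
      _ ≤ 0 + cutoff d η := add_le_add (sub_nonpos.2 (ha.sub hd).le_algebraMap_norm_self)
          (sub_algebraMap_le_cutoff hd η)
      _ = cutoff d η := zero_add _
  calc γ • (f * f) ≤ f * (a - algebraMap ℝ A ε) * f + γ • (f * f) := le_add_of_nonneg_left hfaf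
    _ = f * (a - algebraMap ℝ A ε + algebraMap ℝ A γ) * f := by
      rw [mul_add, add_mul, Algebra.algebraMap_eq_smul_one γ, mul_smul_comm, mul_one,
        smul_mul_assoc]
    _ ≤ f * cutoff d η * f := hf.conjugate_le_conjugate hle

theorem exists_cutoff_eq_mul_mul_star {a d : A} (ha : IsSelfAdjoint a) (hd : IsSelfAdjoint d)
    {ε : ℝ} (h : ‖a - d‖ < ε) : ∃ z : A, cutoff a ε = z * d * star z := by
  let _ := CStarAlgebra.spectralOrder A
  have := CStarAlgebra.spectralOrderedRing A
  obtain ⟨η, hη, hη_eq⟩ : ∃ η : ℝ, 0 < η ∧ ε - ‖a - d‖ - η = η :=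
    ⟨(ε - ‖a - d‖) / 2, by linarith, by ring⟩
  obtain ⟨f, hf, hff, hfaf⟩ := exists_mul_self_eq_cutoff ha ε
  obtain ⟨g, hg, hgdg, hgg⟩ := exists_mul_mul_eq_cutoff hd hη
  have hf_le : f * star f ≤ η⁻¹ • (f * cutoff d η * f) := by
    rw [hf.star_eq, le_inv_smul_iff_of_pos hη]
    simpa only [hη_eq] using smul_mul_self_le_mul_cutoff_mul ha hd hf hfaf η
  have hgf_conj : star (g * f) * d * (g * f) = f * cutoff d η * f := by
    rw [← hgdg, star_mul, hf.star_eq, hg.star_eq]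
    simp only [mul_assoc]
  have hgf_le : star (g * f) * (g * f) ≤ η⁻¹ • (f * cutoff d η * f) := by
    simpa only [star_mul, hf.star_eq, hg.star_eq, mul_assoc, mul_smul_comm, smul_mul_assoc] using
      hf.conjugate_le_conjugate hgg
  obtain ⟨y, hy⟩ := exists_star_mul_mul_eq_star_mul_self
    (hf.conjugate_nonneg (cutoff_nonneg d η)) hgf_conj hgf_le hf_le
  exact ⟨star y, by rw [star_star, hy, hf.star_eq, hff]⟩

theorem CuntzBelow.isSelfAdjoint {a c : A} (h : CuntzBelow a c) (hc : IsSelfAdjoint c) :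
    IsSelfAdjoint a := by
  obtain ⟨x, hx⟩ := h
  have hlim : Tendsto (fun n => x n * c * star (x n)) atTop (𝓝 a) :=
    tendsto_iff_norm_sub_tendsto_zero.2 (hx.congr fun _ => norm_sub_rev _ _)
  have hstar (n : ℕ) : star (x n * c * star (x n)) = x n * c * star (x n) :=
    (hc.conjugate (x n)).star_eq
  exact tendsto_nhds_unique (by simpa only [hstar] using hlim.star) hlim

theorem CuntzBelow.exists_cutoff_eq {a c : A} (h : CuntzBelow a c) (hc : IsSelfAdjoint c)
    {ε : ℝ} (hε : 0 < ε) : ∃ s : A, cutoff a ε = s * c * star s := by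
  have ha := h.isSelfAdjoint hc
  obtain ⟨x, hx⟩ := h
  obtain ⟨n, hn⟩ := (hx.eventually_lt_const hε).exists
  obtain ⟨z, hz⟩ := exists_cutoff_eq_mul_mul_star ha (hc.conjugate (x n)) hn
  exact ⟨z * x n, by simp only [hz, star_mul, mul_assoc]⟩

end Rordam

theorem stmt_4_general {A : Type*} [CStarAlgebra A] {a b : A} (hb : IsSelfAdjoint b) {δ : ℝ}
    (hδ : 0 < δ) (h : CuntzBelow a (cutoff b δ)) {ε : ℝ} (hε : 0 < ε) :
    ∃ x : A, cutoff a ε = x * b * star x ∧ ‖x‖ ^ 2 ≤ ‖a‖ / δ := by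
  let _ := CStarAlgebra.spectralOrder A
  have := CStarAlgebra.spectralOrderedRing A
  obtain ⟨s, hs⟩ := h.exists_cutoff_eq (isSelfAdjoint_cutoff b δ) hε
  obtain ⟨g, hg, hgbg, hgg⟩ := exists_mul_mul_eq_cutoff hb hδ
  have hle : (s * g) * star (s * g) ≤ δ⁻¹ • cutoff a ε := by
    simpa only [hs, star_mul, hg.star_eq, mul_assoc, mul_smul_comm, smul_mul_assoc] using
      star_right_conjugate_le_conjugate hgg s
  refine ⟨s * g, by simp only [hs, ← hgbg, star_mul, hg.star_eq, mul_assoc], ?_⟩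
  calc ‖s * g‖ ^ 2 = ‖(s * g) * star (s * g)‖ := by rw [CStarRing.norm_self_mul_star, sq]
    _ ≤ ‖δ⁻¹ • cutoff a ε‖ :=
      CStarAlgebra.norm_le_norm_of_nonneg_of_le (mul_star_self_nonneg _) hle
    _ = ‖cutoff a ε‖ / δ := by
      rw [norm_smul, Real.norm_of_nonneg (inv_nonneg.2 hδ.le), inv_mul_eq_div]
    _ ≤ ‖a‖ / δ := by gcongr; exact norm_cutoff_le a hε.le

theorem stmt_4 {A : Type*} [CStarAlgebra A] [PartialOrder A] [StarOrderedRing A] (a b : A) (ha : 0 ≤ a) (hb : 0 ≤ b)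
    (ha₁ : ‖a‖ ≤ 1) (hb₁ : ‖b‖ ≤ 1) (δ : ℝ) (hδ : 0 < δ)
    (h : CuntzBelow a (cutoff b δ)) (ε : ℝ) (hε : 0 < ε) :
    ∃ x : A, cutoff a ε = x * b * star x ∧ ‖x‖ ^ 2 ≤ ‖a‖ / δ := by
  exact stmt_4_general hb.isSelfAdjoint hδ h hε
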